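/- Let c be a positive integer and μ, ν, μ', ν' ∈ ℝ. If (μ,ν) and (μ',ν') lie in the same orbit of the natural action of GL(2,ℤ) on the torus T² = ℝ²/ℤ², then the quantum Heisenberg manifolds D^c_{μν} and D^c_{μ'ν'} are isomorphic as C*-algebras. -/

import Mathlib

noncomputable section

/-- A (pre-)Hilbert C*-bimodule over a C*-algebra `A` (in the sense of
Brown–Mingo–Shen): an `A`-`A`-bimodule with left and right `A`-valued inner
products making it a left and right (pre-)Hilbert C*-module, subject to the
compatibility condition `⟨m,n⟩_L • p = m • ⟨n,p⟩_R`.  The module actions and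
inner products are bundled as plain functions. -/
structure CstarBimodule (A M : Type*)
    [NormedRing A] [StarRing A] [CStarRing A] [NormedAlgebra ℂ A] [StarModule ℂ A]
    [AddCommGroup M] [Module ℂ M] : Type _ where
  lsmul : A → M → M
  rsmul : M → A → M
  innerL : M → M → A
  innerR : M → M → A
  lsmul_add : ∀ a (m n : M), lsmul a (m + n) = lsmul a m + lsmul a n
  add_lsmul : ∀ a b (m : M), lsmul (a + b) m = lsmul a m + lsmul b m
  mul_lsmul : ∀ a b (m : M), lsmul (a * b) m = lsmul a (lsmul b m)
  lsmul_smulc : ∀ (c : ℂ) a (m : M), lsmul (c • a) m = c • lsmul a m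
  rsmul_add : ∀ (m n : M) a, rsmul (m + n) a = rsmul m a + rsmul n a
  add_rsmul : ∀ (m : M) a b, rsmul m (a + b) = rsmul m a + rsmul m b
  rsmul_mul : ∀ (m : M) a b, rsmul m (a * b) = rsmul (rsmul m a) b
  rsmul_smulc : ∀ (c : ℂ) (m : M) a, rsmul m (c • a) = c • rsmul m a
  lsmul_rsmul : ∀ a (m : M) b, rsmul (lsmul a m) b = lsmul a (rsmul m b)
  innerL_add_left : ∀ m n p : M, innerL (m + n) p = innerL m p + innerL n p
  innerL_smul_left : ∀ (c : ℂ) (m n : M), innerL (c • m) n = c • innerL m n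
  innerL_lsmul_left : ∀ a (m n : M), innerL (lsmul a m) n = a * innerL m n
  innerL_star : ∀ m n : M, star (innerL m n) = innerL n m
  innerL_nonneg : ∀ m : M, ∃ b, innerL m m = star b * b
  innerL_definite : ∀ m : M, innerL m m = 0 → m = 0
  innerR_add_right : ∀ m n p : M, innerR m (n + p) = innerR m n + innerR m p
  innerR_smul_right : ∀ (c : ℂ) (m n : M), innerR m (c • n) = c • innerR m n
  innerR_rsmul_right : ∀ (m n : M) a, innerR m (rsmul n a) = innerR m n * a
  innerR_star : ∀ m n : M, star (innerR m n) = innerR n m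
  innerR_nonneg : ∀ m : M, ∃ b, innerR m m = star b * b
  innerR_definite : ∀ m : M, innerR m m = 0 → m = 0
  compat : ∀ m n p : M, lsmul (innerL m n) p = rsmul m (innerR n p)

variable {A M N : Type*}
  [NormedRing A] [StarRing A] [CStarRing A] [NormedAlgebra ℂ A] [StarModule ℂ A]
  [AddCommGroup M] [Module ℂ M] [AddCommGroup N] [Module ℂ N]

/-- `Φ : M → N` is an isomorphism of left Hilbert `A`-modules: a bijective
`A`-linear additive map preserving the left `A`-valued inner products. -/
def IsLeftHilbertIso (S : CstarBimodule A M) (T : CstarBimodule A N) (Φ : M → N) : Prop :=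
  Function.Bijective Φ ∧ (∀ m n : M, Φ (m + n) = Φ m + Φ n) ∧
    (∀ a (m : M), Φ (S.lsmul a m) = T.lsmul a (Φ m)) ∧
    (∀ m n : M, T.innerL (Φ m) (Φ n) = S.innerL m n)

/-- An isomorphism of Hilbert C*-bimodules: additionally preserves the right
action and the right inner product. -/
def IsBimoduleIso (S : CstarBimodule A M) (T : CstarBimodule A N) (Φ : M → N) : Prop :=
  IsLeftHilbertIso S T Φ ∧ (∀ (m : M) a, Φ (S.rsmul m a) = T.rsmul (Φ m) a) ∧
    (∀ m n : M, T.innerR (Φ m) (Φ n) = S.innerR m n)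

variable (S : CstarBimodule A M)

/-- A covariant representation of the Hilbert C*-bimodule `M` over `A` in a
C*-algebra `B` (the relations defining the crossed product `A ⋊_M ℤ`). -/
structure CovariantRep (B : Type*) [NormedRing B] [StarRing B] [CStarRing B]
    [NormedAlgebra ℂ B] [StarModule ℂ B] where
  ρ : A →⋆ₙₐ[ℂ] B
  ψ : M → B
  ψ_add : ∀ m n : M, ψ (m + n) = ψ m + ψ n
  ψ_smul : ∀ (c : ℂ) (m : M), ψ (c • m) = c • ψ m
  cov_lsmul : ∀ a (m : M), ψ (S.lsmul a m) = ρ a * ψ m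
  cov_rsmul : ∀ (m : M) a, ψ (S.rsmul m a) = ψ m * ρ a
  cov_innerL : ∀ m n : M, ψ m * star (ψ n) = ρ (S.innerL m n)
  cov_innerR : ∀ m n : M, star (ψ m) * ψ n = ρ (S.innerR m n)

/-- `B`, together with the covariant representation `r`, is the crossed
product `A ⋊_M ℤ`: the images of `A` and `M` generate `B` as a closed
*-subalgebra, and `(B, r)` is universal among covariant representations. -/
def IsCrossedProduct (B : Type*) [NormedRing B] [StarRing B] [CStarRing B]
    [NormedAlgebra ℂ B] [StarModule ℂ B] [CompleteSpace B]
    (r : CovariantRep S B) : Prop :=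
  (∀ C : NonUnitalStarSubalgebra ℂ B, IsClosed (C : Set B) →
      Set.range r.ρ ⊆ C → Set.range r.ψ ⊆ C → C = ⊤) ∧
  ∀ (C : Type*) [NormedRing C] [StarRing C] [CStarRing C] [NormedAlgebra ℂ C]
      [StarModule ℂ C] [CompleteSpace C] (r' : CovariantRep S C),
    ∃! φ : B →⋆ₙₐ[ℂ] C,
      (∀ a : A, φ (r.ρ a) = r'.ρ a) ∧ ∀ m : M, φ (r.ψ m) = r'.ψ m

/-- `e(-c(y-ν))` for `y ∈ T = ℝ/ℤ` (well defined since `c ∈ ℤ`). -/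
def eChar (c : ℤ) (ν : ℝ) (y : UnitAddCircle) : ℂ :=
  ((AddCircle.toCircle (y - (ν : UnitAddCircle))) ^ (-c) : Circle)

/-- The space `X^c_ν` of continuous functions on `ℝ × T` with
`f(x+1,y) = e(-c(y-ν)) f(x,y)`, as a `ℂ`-submodule of `C(ℝ × T, ℂ)`. -/
def Xcv (c : ℤ) (ν : ℝ) : Submodule ℂ C(ℝ × UnitAddCircle, ℂ) where
  carrier := {f | ∀ (x : ℝ) (y : UnitAddCircle), f (x + 1, y) = eChar c ν y * f (x, y)}
  add_mem' := by
    intro f g hf hg x y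
    simp only [ContinuousMap.add_apply, hf x y, hg x y, mul_add]
  zero_mem' := by
    intro x y
    simp
  smul_mem' := by
    intro a f hf x y
    simp only [ContinuousMap.coe_smul, Pi.smul_apply, hf x y, smul_eq_mul]
    ring

/-- The function algebra `C(T²)`. -/
abbrev CT2 := C(UnitAddCircle × UnitAddCircle, ℂ)

/-- The Hilbert C*-bimodule `(X^c_ν)_{α_{μν}} = X^c_ν ⊗ C(T²)_{α_{μν}}` over
`C(T²)` whose crossed product by `ℤ` is the quantum Heisenberg manifold
`D^c_{μν}`: left action and left inner product are pointwise, while the right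
action and right inner product are twisted by the translation automorphism
`α_{μν}(x,y) = (x+2μ, y+2ν)`. -/
def IsHeisenbergBimodule (c : ℤ) (μ ν : ℝ)
    (S : CstarBimodule CT2 (Xcv c ν)) : Prop :=
  (∀ (a : CT2) (f : Xcv c ν) (x : ℝ) (y : UnitAddCircle),
    (S.lsmul a f : C(ℝ × UnitAddCircle, ℂ)) (x, y) =
      a ((x : UnitAddCircle), y) * (f : C(ℝ × UnitAddCircle, ℂ)) (x, y)) ∧
  (∀ (f : Xcv c ν) (a : CT2) (x : ℝ) (y : UnitAddCircle),
    (S.rsmul f a : C(ℝ × UnitAddCircle, ℂ)) (x, y) =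
      (f : C(ℝ × UnitAddCircle, ℂ)) (x, y) *
        a ((x : UnitAddCircle) + ((2 * μ : ℝ) : UnitAddCircle),
           y + ((2 * ν : ℝ) : UnitAddCircle))) ∧
  (∀ (f g : Xcv c ν) (x : ℝ) (y : UnitAddCircle),
    (S.innerL f g) ((x : UnitAddCircle), y) =
      (f : C(ℝ × UnitAddCircle, ℂ)) (x, y) *
        star ((g : C(ℝ × UnitAddCircle, ℂ)) (x, y))) ∧
  (∀ (f g : Xcv c ν) (x : ℝ) (y : UnitAddCircle),
    (S.innerR f g) ((x : UnitAddCircle) + ((2 * μ : ℝ) : UnitAddCircle),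
        y + ((2 * ν : ℝ) : UnitAddCircle)) =
      star ((f : C(ℝ × UnitAddCircle, ℂ)) (x, y)) *
        (g : C(ℝ × UnitAddCircle, ℂ)) (x, y))

section CrossedProduct

variable {S} {S' : CstarBimodule A N}

universe w w'

theorem exists_starAlgEquiv_of_small (B : Type*) [NormedRing B] [StarRing B] [CStarRing B]
    [NormedAlgebra ℂ B] [StarModule ℂ B] [CompleteSpace B] [Small.{w} B] :
    ∃ (C : Type w) (_ : NormedRing C) (_ : StarRing C) (_ : CStarRing C) (_ : NormedAlgebra ℂ C)
      (_ : StarModule ℂ C) (_ : CompleteSpace C), Nonempty (B ≃⋆ₐ[ℂ] C) := by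
  obtain ⟨C, ⟨e'⟩⟩ := Small.equiv_small.{w} (α := B)
  let e : C ≃ B := e'.symm
  let i1 : NormedRing C := e.normedRing
  let i2 : NormedAlgebra ℂ C :=
    { e.algebra ℂ with norm_smul_le := (e.normedSpace ℂ).norm_smul_le }
  have hmul (x y : C) : e (x * y) = e x * e y := e.apply_symm_apply _
  have hadd (x y : C) : e (x + y) = e x + e y := e.apply_symm_apply _
  have hsmul (k : ℂ) (x : C) : e (k • x) = k • e x := e.apply_symm_apply _
  have hnorm (x : C) : ‖x‖ = ‖e x‖ := rfl
  let i3 : StarRing C :=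
    { star := fun x => e.symm (star (e x))
      star_involutive := fun x => by simp
      star_mul := fun x y => e.injective (by simp [hmul])
      star_add := fun x y => e.injective (by simp [hadd]) }
  have hstar (x : C) : e (star x) = star (e x) := e.apply_symm_apply _
  have i4 : CStarRing C :=
    ⟨fun x => by rw [hnorm, hnorm, hmul, hstar, CStarRing.norm_star_mul_self]⟩
  have i5 : StarModule ℂ C :=
    ⟨fun k x => e.injective (by simp [hstar, hsmul])⟩
  have hisom : Isometry e := Isometry.of_dist_eq fun _ _ => rfl
  have i6 : CompleteSpace C :=
    (IsometryEquiv.mk e hisom).completeSpace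
  let f : C ≃⋆ₐ[ℂ] B :=
    { e with
      map_mul' := hmul
      map_add' := hadd
      map_star' := hstar
      map_smul' := hsmul }
  exact ⟨_, i1, i3, i4, i2, i5, i6, ⟨f.symm⟩⟩

variable {B : Type*} [NormedRing B] [StarRing B] [CStarRing B] [NormedAlgebra ℂ B]
  [StarModule ℂ B] [CompleteSpace B]
  {B' : Type*} [NormedRing B'] [StarRing B'] [CStarRing B'] [NormedAlgebra ℂ B']
  [StarModule ℂ B'] [CompleteSpace B']

/-- The image of a covariant representation under a *-homomorphism. -/
def CovariantRep.map (r : CovariantRep S B) (φ : B →⋆ₙₐ[ℂ] B') : CovariantRep S B' where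
  ρ := φ.comp r.ρ
  ψ m := φ (r.ψ m)
  ψ_add m n := by rw [r.ψ_add, map_add]
  ψ_smul c m := by rw [r.ψ_smul, map_smul]
  cov_lsmul a m := by rw [r.cov_lsmul, map_mul]; rfl
  cov_rsmul m a := by rw [r.cov_rsmul, map_mul]; rfl
  cov_innerL m n := by rw [← map_star, ← map_mul, r.cov_innerL]; rfl
  cov_innerR m n := by rw [← map_star, ← map_mul, r.cov_innerR]; rfl

theorem IsCrossedProduct.small [Small.{w} A] [Small.{w} M] {r : CovariantRep S B}
    (hB : IsCrossedProduct S B r) : Small.{w} B := by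
  let f : Shrink.{w} A ⊕ Shrink.{w} M → B :=
    Sum.elim (fun a => r.ρ ((equivShrink A).symm a)) (fun m => r.ψ ((equivShrink M).symm m))
  let D := StarAlgebra.adjoin ℂ (Set.range f)
  have hD : (D : Set B) = Set.range (FreeAlgebra.lift ℂ (Sum.elim f (fun i => star (f i)))) := by
    have h1 : D.toSubalgebra = Algebra.adjoin ℂ (Set.range f ∪ star (Set.range f)) := rfl
    have h2 : Set.range f ∪ star (Set.range f) =
        Set.range (Sum.elim f (fun i => star (f i))) := by
      rw [Set.Sum.elim_range f]
      refine congrArg _ ?_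
      ext x
      simp only [Set.mem_star, Set.mem_range]
      exact exists_congr fun i => ⟨fun h => by rw [h, star_star], fun h => by rw [← h, star_star]⟩
    rw [h2, Algebra.adjoin_range_eq_range_freeAlgebra_lift] at h1
    exact congrArg (fun E : Subalgebra ℂ B => (E : Set B)) h1
  have : Small.{w} (D : Set B) := by rw [hD]; infer_instance
  have htop : closure (D : Set B) = Set.univ := by
    have hsub := StarAlgebra.subset_adjoin ℂ (Set.range f)
    have := hB.1 D.topologicalClosure.toNonUnitalStarSubalgebra
      D.isClosed_topologicalClosure ?_ ?_
    · have h := congrArg (fun E : NonUnitalStarSubalgebra ℂ B => (E : Set B)) this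
      exact h
    · rintro _ ⟨a, rfl⟩
      exact subset_closure (hsub ⟨Sum.inl (equivShrink A a), by simp [f]⟩)
    · rintro _ ⟨m, rfl⟩
      exact subset_closure (hsub ⟨Sum.inr (equivShrink M m), by simp [f]⟩)
  refine small_of_surjective (α := ℕ → (D : Set B))
    (f := fun u => Filter.limUnder Filter.atTop fun n => (u n : B)) fun b => ?_
  obtain ⟨u, hu, hlim⟩ := mem_closure_iff_seq_limit.1 (htop ▸ Set.mem_univ b)
  exact ⟨fun n => ⟨u n, hu n⟩, hlim.limUnder_eq⟩

theorem IsCrossedProduct.hom_eq_id {r : CovariantRep S B} (hB : IsCrossedProduct S B r)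
    {φ : B →⋆ₙₐ[ℂ] B} (hρ : ∀ a, φ (r.ρ a) = r.ρ a) (hψ : ∀ m, φ (r.ψ m) = r.ψ m) (b : B) :
    φ b = b := by
  let : CStarAlgebra B := {}
  have hφ : Continuous φ :=
    (NonUnitalStarAlgHom.instContinuousLinearMapClassComplex (F := B →⋆ₙₐ[ℂ] B)).map_continuous φ
  let E : NonUnitalStarSubalgebra ℂ B := NonUnitalStarAlgHom.equalizer φ (.id ℂ B)
  have hE : E = ⊤ := hB.1 E (isClosed_eq hφ continuous_id)
    (by rintro _ ⟨a, rfl⟩; exact hρ a) (by rintro _ ⟨m, rfl⟩; exact hψ m)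
  have : b ∈ E := hE ▸ NonUnitalStarAlgebra.mem_top
  exact this

/-- The universal property of a crossed product, for targets living in any universe. -/
theorem IsCrossedProduct.exists_hom {r : CovariantRep S B}
    (hB : IsCrossedProduct.{_, _, _, w} S B r) [Small.{w} B'] (s : CovariantRep S B') :
    ∃ φ : B →⋆ₙₐ[ℂ] B', (∀ a, φ (r.ρ a) = s.ρ a) ∧ ∀ m, φ (r.ψ m) = s.ψ m := by
  obtain ⟨C, i1, i2, i3, i4, i5, i6, ⟨e⟩⟩ := exists_starAlgEquiv_of_small.{w} B'
  let e₁ : B' →⋆ₙₐ[ℂ] C := e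
  let e₂ : C →⋆ₙₐ[ℂ] B' := e.symm
  obtain ⟨φ, ⟨hρ, hψ⟩, -⟩ := hB.2 C (s.map e₁)
  refine ⟨e₂.comp φ, fun a => ?_, fun m => ?_⟩
  · exact (congrArg e.symm (hρ a)).trans (e.symm_apply_apply _)
  · exact (congrArg e.symm (hψ m)).trans (e.symm_apply_apply _)

theorem IsCrossedProduct.nonempty_starAlgEquiv {A M N : Type}
    [NormedRing A] [StarRing A] [CStarRing A] [NormedAlgebra ℂ A] [StarModule ℂ A]
    [AddCommGroup M] [Module ℂ M] [AddCommGroup N] [Module ℂ N]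
    {S : CstarBimodule A M} {S' : CstarBimodule A N}
    {r : CovariantRep S B} (hB : IsCrossedProduct.{_, _, _, w} S B r)
    {r' : CovariantRep S' B'} (hB' : IsCrossedProduct.{_, _, _, w'} S' B' r')
    (s : CovariantRep S B') (s' : CovariantRep S' B)
    (hs : ∀ φ : B' →⋆ₙₐ[ℂ] B, (∀ a, φ (r'.ρ a) = s'.ρ a) → (∀ m, φ (r'.ψ m) = s'.ψ m) →
      (∀ a, φ (s.ρ a) = r.ρ a) ∧ ∀ m, φ (s.ψ m) = r.ψ m)
    (hs' : ∀ φ : B →⋆ₙₐ[ℂ] B', (∀ a, φ (r.ρ a) = s.ρ a) → (∀ m, φ (r.ψ m) = s.ψ m) →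
      (∀ a, φ (s'.ρ a) = r'.ρ a) ∧ ∀ m, φ (s'.ψ m) = r'.ψ m) :
    Nonempty (B ≃⋆ₐ[ℂ] B') := by
  have : Small.{0} B := hB.small
  have : Small.{0} B' := hB'.small
  have := small_lift.{_, w', 0} B
  have := small_lift.{_, w, 0} B'
  obtain ⟨φ, hφρ, hφψ⟩ := hB.exists_hom s
  obtain ⟨φ', hφ'ρ, hφ'ψ⟩ := hB'.exists_hom s'
  obtain ⟨h1, h2⟩ := hs φ' hφ'ρ hφ'ψ
  obtain ⟨h3, h4⟩ := hs' φ hφρ hφψ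
  have hl : ∀ b, φ' (φ b) = b := hB.hom_eq_id (φ := φ'.comp φ)
    (fun a => (congrArg φ' (hφρ a)).trans (h1 a)) (fun m => (congrArg φ' (hφψ m)).trans (h2 m))
  have hr : ∀ b, φ (φ' b) = b := hB'.hom_eq_id (φ := φ.comp φ')
    (fun a => (congrArg φ (hφ'ρ a)).trans (h3 a)) (fun m => (congrArg φ (hφ'ψ m)).trans (h4 m))
  exact ⟨StarAlgEquiv.ofBijective φ
    ⟨Function.LeftInverse.injective hl, Function.RightInverse.surjective hr⟩⟩

/-- `Φ : N → M` is an isomorphism of Hilbert C*-bimodules covering the automorphism `σ`. -/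
structure IsIsoOver (S : CstarBimodule A M) (S' : CstarBimodule A N) (σ : A → A) (Φ : N → M) :
    Prop where
  map_add : ∀ m n, Φ (m + n) = Φ m + Φ n
  map_smul : ∀ (c : ℂ) m, Φ (c • m) = c • Φ m
  map_lsmul : ∀ a m, Φ (S'.lsmul a m) = S.lsmul (σ a) (Φ m)
  map_rsmul : ∀ m a, Φ (S'.rsmul m a) = S.rsmul (Φ m) (σ a)
  map_innerL : ∀ m n, S.innerL (Φ m) (Φ n) = σ (S'.innerL m n)
  map_innerR : ∀ m n, S.innerR (Φ m) (Φ n) = σ (S'.innerR m n)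

/-- `Φ : N → M` is a conjugate-linear isomorphism of `S'` onto the dual of `S`, covering the
automorphism `σ`. -/
structure IsAntiIsoOver (S : CstarBimodule A M) (S' : CstarBimodule A N) (σ : A → A)
    (Φ : N → M) : Prop where
  map_add : ∀ m n, Φ (m + n) = Φ m + Φ n
  map_smul : ∀ (c : ℂ) m, Φ (c • m) = star c • Φ m
  map_lsmul : ∀ a m, Φ (S'.lsmul a m) = S.rsmul (Φ m) (star (σ a))
  map_rsmul : ∀ m a, Φ (S'.rsmul m a) = S.lsmul (star (σ a)) (Φ m)
  map_innerL : ∀ m n, S.innerR (Φ m) (Φ n) = σ (S'.innerL m n)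
  map_innerR : ∀ m n, S.innerL (Φ m) (Φ n) = σ (S'.innerR m n)

variable {σ : A ≃⋆ₐ[ℂ] A} {Φ : N ≃ M}

theorem IsIsoOver.symm (h : IsIsoOver S S' σ Φ) : IsIsoOver S' S σ.symm Φ.symm where
  map_add m n := by simp [Equiv.symm_apply_eq, h.map_add]
  map_smul c m := by simp [Equiv.symm_apply_eq, h.map_smul]
  map_lsmul a m := by simp [Equiv.symm_apply_eq, h.map_lsmul]
  map_rsmul m a := by simp [Equiv.symm_apply_eq, h.map_rsmul]
  map_innerL m n := by rw [← σ.symm_apply_apply (S'.innerL _ _), ← h.map_innerL]; simp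
  map_innerR m n := by rw [← σ.symm_apply_apply (S'.innerR _ _), ← h.map_innerR]; simp

theorem IsAntiIsoOver.symm (h : IsAntiIsoOver S S' σ Φ) :
    IsAntiIsoOver S' S σ.symm Φ.symm where
  map_add m n := by simp [Equiv.symm_apply_eq, h.map_add]
  map_smul c m := by simp [Equiv.symm_apply_eq, h.map_smul]
  map_lsmul a m := by simp [Equiv.symm_apply_eq, h.map_rsmul, map_star]
  map_rsmul m a := by simp [Equiv.symm_apply_eq, h.map_lsmul, map_star]
  map_innerL m n := by rw [← σ.symm_apply_apply (S'.innerR _ _), ← h.map_innerR]; simp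
  map_innerR m n := by rw [← σ.symm_apply_apply (S'.innerL _ _), ← h.map_innerL]; simp

/-- Pull back a covariant representation along an isomorphism of bimodules. -/
def CovariantRep.comap (r : CovariantRep S B) (h : IsIsoOver S S' σ Φ) : CovariantRep S' B where
  ρ := r.ρ.comp (σ : A →⋆ₙₐ[ℂ] A)
  ψ m := r.ψ (Φ m)
  ψ_add m n := by rw [h.map_add, r.ψ_add]
  ψ_smul c m := by rw [h.map_smul, r.ψ_smul]
  cov_lsmul a m := by rw [h.map_lsmul, r.cov_lsmul]; rfl
  cov_rsmul m a := by rw [h.map_rsmul, r.cov_rsmul]; rfl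
  cov_innerL m n := by rw [r.cov_innerL, h.map_innerL]; rfl
  cov_innerR m n := by rw [r.cov_innerR, h.map_innerR]; rfl

/-- Pull back a covariant representation along an isomorphism onto the dual bimodule. -/
def CovariantRep.anticomap (r : CovariantRep S B) (h : IsAntiIsoOver S S' σ Φ) :
    CovariantRep S' B where
  ρ := r.ρ.comp (σ : A →⋆ₙₐ[ℂ] A)
  ψ m := star (r.ψ (Φ m))
  ψ_add m n := by rw [h.map_add, r.ψ_add, star_add]
  ψ_smul c m := by rw [h.map_smul, r.ψ_smul, star_smul, star_star]
  cov_lsmul a m := by rw [h.map_lsmul, r.cov_rsmul, star_mul, map_star, star_star]; rfl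
  cov_rsmul m a := by rw [h.map_rsmul, r.cov_lsmul, star_mul, map_star, star_star]; rfl
  cov_innerL m n := by rw [star_star, r.cov_innerR, h.map_innerL]; rfl
  cov_innerR m n := by rw [star_star, r.cov_innerL, h.map_innerR]; rfl

section

variable {A M N : Type}
  [NormedRing A] [StarRing A] [CStarRing A] [NormedAlgebra ℂ A] [StarModule ℂ A]
  [AddCommGroup M] [Module ℂ M] [AddCommGroup N] [Module ℂ N]
  {S : CstarBimodule A M} {S' : CstarBimodule A N} {σ : A ≃⋆ₐ[ℂ] A} {Φ : N ≃ M}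

theorem IsIsoOver.nonempty_starAlgEquiv (h : IsIsoOver S S' σ Φ)
    {r : CovariantRep S B} (hB : IsCrossedProduct S B r)
    {r' : CovariantRep S' B'} (hB' : IsCrossedProduct S' B' r') :
    Nonempty (B ≃⋆ₐ[ℂ] B') := by
  refine hB.nonempty_starAlgEquiv hB' (r'.comap h.symm) (r.comap h) ?_ ?_
  · refine fun φ hρ hψ => ⟨fun a => ?_, fun m => ?_⟩
    · exact (hρ (σ.symm a)).trans (congrArg r.ρ (σ.apply_symm_apply a))
    · exact (hψ (Φ.symm m)).trans (congrArg r.ψ (Φ.apply_symm_apply m))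
  · refine fun φ hρ hψ => ⟨fun a => ?_, fun m => ?_⟩
    · exact (hρ (σ a)).trans (congrArg r'.ρ (σ.symm_apply_apply a))
    · exact (hψ (Φ m)).trans (congrArg r'.ψ (Φ.symm_apply_apply m))

theorem IsAntiIsoOver.nonempty_starAlgEquiv (h : IsAntiIsoOver S S' σ Φ)
    {r : CovariantRep S B} (hB : IsCrossedProduct S B r)
    {r' : CovariantRep S' B'} (hB' : IsCrossedProduct S' B' r') :
    Nonempty (B ≃⋆ₐ[ℂ] B') := by
  refine hB.nonempty_starAlgEquiv hB' (r'.anticomap h.symm) (r.anticomap h) ?_ ?_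
  · refine fun φ hρ hψ => ⟨fun a => ?_, fun m => ?_⟩
    · exact (hρ (σ.symm a)).trans (congrArg r.ρ (σ.apply_symm_apply a))
    · change φ (star (r'.ψ (Φ.symm m))) = r.ψ m
      rw [map_star, hψ]
      exact (star_star _).trans (congrArg r.ψ (Φ.apply_symm_apply m))
  · refine fun φ hρ hψ => ⟨fun a => ?_, fun m => ?_⟩
    · exact (hρ (σ a)).trans (congrArg r'.ρ (σ.symm_apply_apply a))
    · change φ (star (r.ψ (Φ m))) = r'.ψ m
      rw [map_star, hψ]
      exact (star_star _).trans (congrArg r'.ψ (Φ.symm_apply_apply m))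

end

end CrossedProduct

/-- The character `t ↦ exp (2πit)`. -/
def expChar (t : ℝ) : ℂ := (AddCircle.toCircle (t : UnitAddCircle) : Circle)

theorem expChar_add (s t : ℝ) : expChar (s + t) = expChar s * expChar t := by
  simp [expChar, AddCircle.toCircle_add]

theorem expChar_zero : expChar 0 = 1 := by simp [expChar]

theorem expChar_intCast (n : ℤ) : expChar n = 1 := by
  rw [expChar, (AddCircle.coe_eq_zero_iff (1 : ℝ)).2 ⟨n, by simp⟩]
  simp

theorem expChar_neg_mul_self (t : ℝ) : expChar (-t) * expChar t = 1 := by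
  rw [← expChar_add, neg_add_cancel, expChar_zero]

theorem star_expChar (t : ℝ) : star (expChar t) = expChar (-t) := by
  rw [expChar, expChar, AddCircle.coe_neg, AddCircle.toCircle_neg, Circle.coe_inv_eq_conj]
  rfl

theorem expChar_mul_star (t : ℝ) : expChar t * star (expChar t) = 1 := by
  rw [star_expChar, mul_comm, expChar_neg_mul_self]

theorem expChar_mul_mul_star (t : ℝ) (z w : ℂ) :
    expChar t * z * (w * star (expChar t)) = z * w := by
  linear_combination (z * w) * expChar_mul_star t

theorem mul_star_mul_expChar (t : ℝ) (z w : ℂ) :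
    z * star (expChar t) * (expChar t * w) = z * w := by
  linear_combination (z * w) * expChar_mul_star t

@[fun_prop]
theorem continuous_expChar : Continuous expChar :=
  continuous_subtype_val.comp (AddCircle.continuous_toCircle.comp (AddCircle.continuous_mk' 1))

theorem eChar_coe (c : ℤ) (ν y : ℝ) :
    eChar c ν (y : UnitAddCircle) = expChar (-(c : ℝ) * (y - ν)) := by
  rw [eChar, expChar, ← AddCircle.toCircle_zsmul, ← AddCircle.coe_sub, ← AddCircle.coe_zsmul]
  simp

/-- The quasi-periodicity satisfied by the lifts to `ℝ × ℝ` of the elements of `Xcv c ν`. -/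
def IsQuasiperiodic (c : ℤ) (ν : ℝ) (F : ℝ → ℝ → ℂ) : Prop :=
  ∀ (m n : ℤ) (x y : ℝ), F (x + m) (y + n) = expChar (-(c * m * (y - ν))) * F x y

theorem Xcv.isQuasiperiodic {c : ℤ} {ν : ℝ} (f : Xcv c ν) :
    IsQuasiperiodic c ν fun x y => (f : C(ℝ × UnitAddCircle, ℂ)) (x, (y : UnitAddCircle)) := by
  have key (x y : ℝ) : (f : C(ℝ × UnitAddCircle, ℂ)) (x + 1, (y : UnitAddCircle)) =
      expChar (-(c : ℝ) * (y - ν)) * (f : C(ℝ × UnitAddCircle, ℂ)) (x, (y : UnitAddCircle)) := by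
    rw [← eChar_coe]
    exact f.2 x y
  intro m n x y
  have hy : ((y + n : ℝ) : UnitAddCircle) = y := by
    have hn : ((n : ℝ) : UnitAddCircle) = 0 :=
      (AddCircle.coe_eq_zero_iff (1 : ℝ)).2 ⟨n, by simp⟩
    rw [AddCircle.coe_add, hn, add_zero]
  simp only [hy]
  induction m with
  | zero => simp [expChar_zero]
  | succ i hi =>
    have h := key (x + (i : ℤ)) y
    rw [hi, ← mul_assoc, ← expChar_add] at h
    convert h using 3
    · push_cast; ring
    · push_cast; ring
  | pred i hi =>
    have h := key (x + ((-(i : ℤ) - 1 : ℤ) : ℝ)) y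
    have hx : x + ((-(i : ℤ) - 1 : ℤ) : ℝ) + 1 = x + ((-(i : ℤ) : ℤ) : ℝ) := by push_cast; ring
    rw [hx, hi] at h
    have h' := congrArg (fun z => expChar (-(-(c : ℝ) * (y - ν))) * z) h
    simp only [← mul_assoc, ← expChar_add, neg_add_cancel, expChar_zero, one_mul] at h'
    rw [← h']
    congr 2
    push_cast
    ring

theorem Xcv.ext_coe {c : ℤ} {ν : ℝ} {f g : Xcv c ν}
    (h : ∀ x y : ℝ, (f : C(ℝ × UnitAddCircle, ℂ)) (x, (y : UnitAddCircle)) =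
      (g : C(ℝ × UnitAddCircle, ℂ)) (x, (y : UnitAddCircle))) : f = g := by
  ext ⟨x, y⟩
  induction y using QuotientAddGroup.induction_on with
  | H y => exact h x y

theorem IsQuasiperiodic.exists_Xcv {c : ℤ} {ν : ℝ} {F : ℝ → ℝ → ℂ}
    (hF : IsQuasiperiodic c ν F) (hc : Continuous fun v : ℝ × ℝ => F v.1 v.2) :
    ∃ f : Xcv c ν, ∀ x y : ℝ, (f : C(ℝ × UnitAddCircle, ℂ)) (x, (y : UnitAddCircle)) = F x y := by
  have hper (x : ℝ) : Function.Periodic (F x) 1 := fun y => by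
    simpa [expChar_zero] using hF 0 1 x y
  let f : ℝ × UnitAddCircle → ℂ := fun v => (hper v.1).lift v.2
  have hq : IsOpenQuotientMap (Prod.map id (fun y : ℝ => (y : UnitAddCircle)) :
      ℝ × ℝ → ℝ × UnitAddCircle) :=
    IsOpenQuotientMap.id.prodMap QuotientAddGroup.isOpenQuotientMap_mk
  have hf : Continuous f := hq.isQuotientMap.continuous_iff.2 hc
  refine ⟨⟨⟨f, hf⟩, fun x y => ?_⟩, fun x y => rfl⟩
  induction y using QuotientAddGroup.induction_on with
  | H y =>
    have h := hF 1 0 x y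
    simp only [Int.cast_one, Int.cast_zero, add_zero, mul_one] at h
    refine h.trans ?_
    rw [← neg_mul, ← eChar_coe]
    rfl

/-- Pulling back along an affine bijection of `ℝ²` with linear part in `GL(2,ℤ)`, of determinant
`ε`, followed by conjugation if `ε = -1`, maps `Xcv c ν'` onto `Xcv c ν` up to a phase. -/
theorem Xcv.exists_equiv_of_det (c : ℤ) (ν ν' t₁ t₂ : ℝ) (p q r s ε : ℤ) (hε : ε * ε = 1)
    (hdet : p * s - q * r = ε) (κ : ℂ → ℂ) (hκc : Continuous κ) (hκκ : ∀ z, κ (κ z) = z)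
    (hκm : ∀ z w, κ (z * w) = κ z * κ w) (hκe : ∀ t, κ (expChar t) = expChar (ε * t)) :
    ∃ (Q : ℝ → ℝ → ℝ) (Φ : Xcv c ν' ≃ Xcv c ν), ∀ f (x y : ℝ),
      (Φ f : C(ℝ × UnitAddCircle, ℂ)) (x, (y : UnitAddCircle)) = expChar (Q x y) *
        κ ((f : C(ℝ × UnitAddCircle, ℂ))
          (p * x + q * y + t₁, ((r * x + s * y + t₂ : ℝ) : UnitAddCircle))) := by
  have hεR : (ε : ℝ) * ε = 1 := by exact_mod_cast hε
  have hdetR : (p : ℝ) * s - q * r = ε := by exact_mod_cast hdet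
  let k : ℝ := ε * c
  let α : ℝ := k * p * r / 2
  let γ : ℝ := k * q * s / 2
  let Q : ℝ → ℝ → ℝ := fun x y => α * x ^ 2 + k * q * r * (x * y) + γ * y ^ 2 +
    (k * p * (t₂ - ν') + c * ν - α) * x + (k * q * (t₂ - ν') - γ) * y
  have hQ (m n : ℤ) (x y : ℝ) : ∃ j : ℤ, Q (x + m) (y + n) + c * m * (y - ν) =
      Q x y + k * (p * m + q * n) * (r * x + s * y + t₂ - ν') + j := by
    obtain ⟨a, ha⟩ : Even (m * (m - 1)) := Int.even_mul_pred_self m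
    obtain ⟨b, hb⟩ : Even (n * (n - 1)) := Int.even_mul_pred_self n
    have ha' : (m : ℝ) * (m - 1) = a + a := by exact_mod_cast ha
    have hb' : (n : ℝ) * (n - 1) = b + b := by exact_mod_cast hb
    refine ⟨ε * c * (p * r * a + q * s * b + q * r * m * n), ?_⟩
    have hk : (c : ℝ) = k * (p * s - q * r) := by
      rw [hdetR]; simp only [k]; linear_combination -(c : ℝ) * hεR
    simp only [Q, α, γ]
    push_cast
    rw [show (ε : ℝ) * c = k from rfl]
    linear_combination (m * y) * hk + (k * p * r / 2) * ha' + (k * q * s / 2) * hb'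
  have hexp (m n : ℤ) (x y : ℝ) :
      expChar (Q (x + m) (y + n)) * expChar (-(k * (p * m + q * n) * (r * x + s * y + t₂ - ν'))) =
        expChar (-(c * m * (y - ν))) * expChar (Q x y) := by
    obtain ⟨j, hj⟩ := hQ m n x y
    rw [← expChar_add, ← expChar_add, ← mul_one (expChar (_ + Q x y)), ← expChar_intCast j,
      ← expChar_add]
    congr 1
    linarith
  have hexp_neg (m n : ℤ) (x y : ℝ) :
      expChar (-Q (x + m) (y + n)) * expChar (-(c * m * (y - ν))) =
        expChar (-(k * (p * m + q * n) * (r * x + s * y + t₂ - ν'))) * expChar (-Q x y) := by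
    obtain ⟨j, hj⟩ := hQ m n x y
    rw [← expChar_add, ← expChar_add, ← mul_one (expChar (-Q (x + m) (y + n) + _)),
      ← expChar_intCast j, ← expChar_add]
    congr 1
    linarith
  have hfwd (f : Xcv c ν') : ∃ g : Xcv c ν, ∀ x y : ℝ,
      (g : C(ℝ × UnitAddCircle, ℂ)) (x, (y : UnitAddCircle)) = expChar (Q x y) *
        κ ((f : C(ℝ × UnitAddCircle, ℂ))
          (p * x + q * y + t₁, ((r * x + s * y + t₂ : ℝ) : UnitAddCircle))) := by
    refine IsQuasiperiodic.exists_Xcv (fun m n x y => ?_) ?_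
    · have h := Xcv.isQuasiperiodic f (p * m + q * n) (r * m + s * n)
        (p * x + q * y + t₁) (r * x + s * y + t₂)
      dsimp only at h
      rw [show p * (x + m) + q * (y + n) + t₁ =
          p * x + q * y + t₁ + ((p * m + q * n : ℤ) : ℝ) by push_cast; ring,
        show r * (x + m) + s * (y + n) + t₂ =
          r * x + s * y + t₂ + ((r * m + s * n : ℤ) : ℝ) by push_cast; ring,
        h, hκm, hκe, ← mul_assoc, ← mul_assoc, ← hexp]
      congr 3
      push_cast
      ring
    · have hQc : Continuous fun v : ℝ × ℝ => Q v.1 v.2 := by fun_prop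
      have := continuous_expChar.comp hQc
      have h2 : Continuous fun v : ℝ × ℝ =>
          ((r * v.1 + s * v.2 + t₂ : ℝ) : UnitAddCircle) :=
        (AddCircle.continuous_mk' 1).comp (by fun_prop)
      exact this.mul (hκc.comp (f.1.continuous.comp (Continuous.prodMk (by fun_prop) h2)))
  let X : ℝ → ℝ → ℝ := fun x y => ε * (s * (x - t₁) - q * (y - t₂))
  let Y : ℝ → ℝ → ℝ := fun x y => ε * (-r * (x - t₁) + p * (y - t₂))
  have hX (x y : ℝ) : p * X x y + q * Y x y + t₁ = x := by
    simp only [X, Y]; linear_combination (ε : ℝ) * (x - t₁) * hdetR + (x - t₁) * hεR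
  have hY (x y : ℝ) : r * X x y + s * Y x y + t₂ = y := by
    simp only [X, Y]; linear_combination (ε : ℝ) * (y - t₂) * hdetR + (y - t₂) * hεR
  have hX' (x y : ℝ) : X (p * x + q * y + t₁) (r * x + s * y + t₂) = x := by
    simp only [X]; linear_combination (ε : ℝ) * x * hdetR + x * hεR
  have hY' (x y : ℝ) : Y (p * x + q * y + t₁) (r * x + s * y + t₂) = y := by
    simp only [Y]; linear_combination (ε : ℝ) * y * hdetR + y * hεR
  have hbwd (g : Xcv c ν) : ∃ f : Xcv c ν', ∀ x y : ℝ,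
      (f : C(ℝ × UnitAddCircle, ℂ)) (x, (y : UnitAddCircle)) = κ (expChar (-Q (X x y) (Y x y)) *
        (g : C(ℝ × UnitAddCircle, ℂ)) (X x y, (Y x y : UnitAddCircle))) := by
    refine IsQuasiperiodic.exists_Xcv (fun m n x y => ?_) ?_
    · have h := Xcv.isQuasiperiodic g (ε * (s * m - q * n)) (ε * (-r * m + p * n)) (X x y) (Y x y)
      have h' := hexp_neg (ε * (s * m - q * n)) (ε * (-r * m + p * n)) (X x y) (Y x y)
      dsimp only at h
      have hm : (p : ℝ) * (ε * (s * m - q * n) : ℤ) + q * (ε * (-r * m + p * n) : ℤ) = m := by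
        push_cast; linear_combination (ε : ℝ) * m * hdetR + m * hεR
      rw [show X (x + m) (y + n) = X x y + ((ε * (s * m - q * n) : ℤ) : ℝ) by
          simp only [X]; push_cast; ring,
        show Y (x + m) (y + n) = Y x y + ((ε * (-r * m + p * n) : ℤ) : ℝ) by
          simp only [Y]; push_cast; ring,
        h, ← mul_assoc, h', hY, hm, mul_assoc, hκm, hκe]
      congr 2
      linear_combination (-(c : ℝ) * m * (y - ν')) * hεR
    · have hQc : Continuous fun v : ℝ × ℝ => -Q (X v.1 v.2) (Y v.1 v.2) := by fun_prop
      have := continuous_expChar.comp hQc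
      have h2 : Continuous fun v : ℝ × ℝ => (Y v.1 v.2 : UnitAddCircle) :=
        (AddCircle.continuous_mk' 1).comp (by fun_prop)
      exact hκc.comp (this.mul (g.1.continuous.comp (Continuous.prodMk (by fun_prop) h2)))
  choose Φ hΦ using hfwd
  choose Ψ hΨ using hbwd
  refine ⟨Q, ⟨Φ, Ψ, fun f => Xcv.ext_coe fun x y => ?_, fun g => Xcv.ext_coe fun x y => ?_⟩, hΦ⟩
  · rw [hΨ, hΦ, hX, hY, ← mul_assoc, expChar_neg_mul_self, one_mul, hκκ]
  · rw [hΦ, hΨ, hκκ, hX', hY', ← mul_assoc, mul_comm (expChar (Q x y)), expChar_neg_mul_self,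
      one_mul]

/-- The automorphism of the torus given by an integer matrix of determinant `ε = ±1`. -/
def torusHomeo (p q r s ε : ℤ) (hε : ε * ε = 1) (hdet : p * s - q * r = ε) :
    UnitAddCircle × UnitAddCircle ≃ₜ UnitAddCircle × UnitAddCircle where
  toFun v := (p • v.1 + q • v.2, r • v.1 + s • v.2)
  invFun v := (ε • (s • v.1 - q • v.2), ε • (-r • v.1 + p • v.2))
  left_inv v := by
    subst hdet
    ext
    · refine Eq.trans ?_ (one_zsmul v.1)
      rw [← hε]
      module
    · refine Eq.trans ?_ (one_zsmul v.2)
      rw [← hε]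
      module
  right_inv v := by
    subst hdet
    ext
    · refine Eq.trans ?_ (one_zsmul v.1)
      rw [← hε]
      module
    · refine Eq.trans ?_ (one_zsmul v.2)
      rw [← hε]
      module
  continuous_toFun := by fun_prop
  continuous_invFun := by fun_prop

theorem torusHomeo_coe (p q r s ε : ℤ) (hε : ε * ε = 1) (hdet : p * s - q * r = ε) (x y : ℝ) :
    torusHomeo p q r s ε hε hdet ((x : UnitAddCircle), (y : UnitAddCircle)) =
      (((p * x + q * y : ℝ) : UnitAddCircle), ((r * x + s * y : ℝ) : UnitAddCircle)) := by
  simp only [AddCircle.coe_add, ← zsmul_eq_mul, AddCircle.coe_zsmul]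
  rfl

theorem CT2.ext_add {a b : CT2} (z w : ℝ)
    (h : ∀ x y : ℝ, a ((x : UnitAddCircle) + (z : UnitAddCircle), (y : UnitAddCircle) + w) =
      b ((x : UnitAddCircle) + (z : UnitAddCircle), (y : UnitAddCircle) + w)) : a = b := by
  ext ⟨x, y⟩
  induction x using QuotientAddGroup.induction_on with
  | H x =>
    induction y using QuotientAddGroup.induction_on with
    | H y =>
      have := h (x - z) (y - w)
      rwa [← AddCircle.coe_add, ← AddCircle.coe_add, sub_add_cancel, sub_add_cancel] at this

theorem CT2.ext_coe {a b : CT2}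
    (h : ∀ x y : ℝ, a ((x : UnitAddCircle), (y : UnitAddCircle)) =
      b ((x : UnitAddCircle), (y : UnitAddCircle))) : a = b :=
  CT2.ext_add 0 0 fun x y => by simpa using h x y

section Heisenberg

variable {c : ℤ} {μ ν μ' ν' : ℝ} {S : CstarBimodule CT2 (Xcv c ν)}
  {S' : CstarBimodule CT2 (Xcv c ν')} {p q r s : ℤ}

theorem IsHeisenbergBimodule.exists_isIsoOver (hS : IsHeisenbergBimodule c μ ν S)
    (hS' : IsHeisenbergBimodule c μ' ν' S') (hdet : p * s - q * r = 1)
    (h₁ : ((p * μ + q * ν : ℝ) : UnitAddCircle) = (μ' : UnitAddCircle))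
    (h₂ : ((r * μ + s * ν : ℝ) : UnitAddCircle) = (ν' : UnitAddCircle)) :
    ∃ (σ : CT2 ≃⋆ₐ[ℂ] CT2) (Φ : Xcv c ν' ≃ Xcv c ν), IsIsoOver S S' σ Φ := by
  obtain ⟨hl, hr, hil, hir⟩ := hS
  obtain ⟨hl', hr', hil', hir'⟩ := hS'
  obtain ⟨Q, Φ, hΦ⟩ := Xcv.exists_equiv_of_det c ν ν' 0 0 p q r s 1 (one_mul 1) hdet id
    continuous_id (fun _ => rfl) (fun _ _ => rfl) (fun t => by simp)
  simp only [add_zero, id] at hΦ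
  let θ := torusHomeo p q r s 1 (one_mul 1) hdet
  have hθ := torusHomeo_coe p q r s 1 (one_mul 1) hdet
  have hθ' (x y : ℝ) : θ ((x : UnitAddCircle) + ((2 * μ : ℝ) : UnitAddCircle),
      (y : UnitAddCircle) + ((2 * ν : ℝ) : UnitAddCircle)) =
      (((p * x + q * y : ℝ) : UnitAddCircle) + ((2 * μ' : ℝ) : UnitAddCircle),
        ((r * x + s * y : ℝ) : UnitAddCircle) + ((2 * ν' : ℝ) : UnitAddCircle)) := by
    rw [← AddCircle.coe_add, ← AddCircle.coe_add, two_mul μ', two_mul ν',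
      AddCircle.coe_add (p := 1) μ', AddCircle.coe_add (p := 1) ν', ← h₁, ← h₂]
    refine (hθ _ _).trans ?_
    simp only [← AddCircle.coe_add]
    congr 2 <;> ring
  have hσ (a : CT2) (v) : θ.compStarAlgEquiv' ℂ ℂ a v = a (θ v) := rfl
  refine ⟨θ.compStarAlgEquiv' ℂ ℂ, Φ, fun f g => Xcv.ext_coe fun x y => ?_,
    fun k f => Xcv.ext_coe fun x y => ?_, fun a f => Xcv.ext_coe fun x y => ?_,
    fun f a => Xcv.ext_coe fun x y => ?_, fun f g => CT2.ext_coe fun x y => ?_,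
    fun f g => CT2.ext_add (2 * μ) (2 * ν) fun x y => ?_⟩
  · simp only [Submodule.coe_add, ContinuousMap.add_apply, hΦ, mul_add]
  · simp only [Submodule.coe_smul, ContinuousMap.smul_apply, hΦ, smul_eq_mul, mul_left_comm]
  · rw [hΦ, hl, hl', hσ, hΦ]
    erw [hθ]
    ring
  · rw [hΦ, hr, hr', hσ, hΦ, hθ', mul_assoc]
  · rw [hil, hσ, hΦ, hΦ, star_mul]
    erw [hθ]
    rw [hil']
    exact expChar_mul_mul_star _ _ _
  · rw [hir, hσ, hθ', hir', hΦ, hΦ, star_mul]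
    exact mul_star_mul_expChar _ _ _

theorem IsHeisenbergBimodule.exists_isAntiIsoOver (hS : IsHeisenbergBimodule c μ ν S)
    (hS' : IsHeisenbergBimodule c μ' ν' S') (hdet : p * s - q * r = -1)
    (h₁ : ((p * μ + q * ν : ℝ) : UnitAddCircle) = (μ' : UnitAddCircle))
    (h₂ : ((r * μ + s * ν : ℝ) : UnitAddCircle) = (ν' : UnitAddCircle)) :
    ∃ (σ : CT2 ≃⋆ₐ[ℂ] CT2) (Φ : Xcv c ν' ≃ Xcv c ν), IsAntiIsoOver S S' σ Φ := by
  obtain ⟨hl, hr, hil, hir⟩ := hS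
  obtain ⟨hl', hr', hil', hir'⟩ := hS'
  have hdet' : -p * -s - -q * -r = -1 := by linarith
  obtain ⟨Q, Φ, hΦ⟩ := Xcv.exists_equiv_of_det c ν ν' (-(2 * (p * μ + q * ν)))
    (-(2 * (r * μ + s * ν))) (-p) (-q) (-r) (-s) (-1) (by norm_num) hdet' star continuous_star
    star_star (fun z w => by rw [star_mul, mul_comm]) (fun t => by simp [star_expChar])
  let θ := torusHomeo (-p) (-q) (-r) (-s) (-1) (by norm_num) hdet'
  have hθ := torusHomeo_coe (-p) (-q) (-r) (-s) (-1) (by norm_num) hdet'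
  let X : ℝ → ℝ → ℝ := fun x y =>
    (-p : ℤ) * x + (-q : ℤ) * y + -(2 * (p * μ + q * ν))
  let Y : ℝ → ℝ → ℝ := fun x y =>
    (-r : ℤ) * x + (-s : ℤ) * y + -(2 * (r * μ + s * ν))
  replace hΦ (f : Xcv c ν') (x y : ℝ) :
      (Φ f : C(ℝ × UnitAddCircle, ℂ)) (x, (y : UnitAddCircle)) = expChar (Q x y) *
        star ((f : C(ℝ × UnitAddCircle, ℂ)) (X x y, (Y x y : UnitAddCircle))) := hΦ f x y
  have hθ₁ (x y : ℝ) : θ ((x : UnitAddCircle), (y : UnitAddCircle)) =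
      ((X x y : UnitAddCircle) + ((2 * μ' : ℝ) : UnitAddCircle),
        (Y x y : UnitAddCircle) + ((2 * ν' : ℝ) : UnitAddCircle)) := by
    rw [two_mul μ', two_mul ν',
      AddCircle.coe_add (p := 1) μ', AddCircle.coe_add (p := 1) ν', ← h₁, ← h₂]
    refine (hθ _ _).trans ?_
    simp only [← AddCircle.coe_add, X, Y]
    congr 2 <;> ring
  have hθ₂ (x y : ℝ) : θ ((x : UnitAddCircle) + ((2 * μ : ℝ) : UnitAddCircle),
      (y : UnitAddCircle) + ((2 * ν : ℝ) : UnitAddCircle)) =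
      ((X x y : UnitAddCircle), (Y x y : UnitAddCircle)) := by
    rw [← AddCircle.coe_add, ← AddCircle.coe_add]
    refine (hθ _ _).trans ?_
    simp only [X, Y]
    push_cast
    congr 2 <;> ring
  have hσ (a : CT2) (v) : θ.compStarAlgEquiv' ℂ ℂ a v = a (θ v) := rfl
  refine ⟨θ.compStarAlgEquiv' ℂ ℂ, Φ, fun f g => Xcv.ext_coe fun x y => ?_,
    fun k f => Xcv.ext_coe fun x y => ?_, fun a f => Xcv.ext_coe fun x y => ?_,
    fun f a => Xcv.ext_coe fun x y => ?_,
    fun f g => CT2.ext_add (2 * μ) (2 * ν) fun x y => ?_, fun f g => CT2.ext_coe fun x y => ?_⟩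
  · simp only [Submodule.coe_add, ContinuousMap.add_apply, hΦ, star_add, mul_add]
  · simp only [Submodule.coe_smul, ContinuousMap.smul_apply, hΦ, smul_eq_mul, star_mul]
    ring
  · rw [hΦ, hr, hl', ContinuousMap.star_apply, hσ, hΦ, hθ₂, star_mul, mul_assoc]
  · rw [hΦ, hl, hr', ContinuousMap.star_apply, hσ, hΦ, hθ₁, star_mul]
    ring
  · rw [hir, hσ, hΦ, hΦ, star_mul, star_star, hθ₂, hil']
    exact mul_star_mul_expChar _ _ _
  · rw [hil, hσ, hθ₁, hir', hΦ, hΦ, star_mul, star_star]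
    exact expChar_mul_mul_star _ _ _

end Heisenberg

/-- Theorem 2.1 (`qhmiso`): if `(μ,ν)` and `(μ',ν')` lie in the same orbit of
the natural `GL(2,ℤ)`-action on the torus `T² = ℝ²/ℤ²`, then the quantum
Heisenberg manifolds `D^c_{μν}` and `D^c_{μ'ν'}` — realized as the crossed
products of `C(T²)` by the bimodules `(X^c_ν)_{α_{μν}}` and
`(X^c_{ν'})_{α_{μ'ν'}}` — are isomorphic C*-algebras. -/
theorem quantum_heisenberg_iso
    (c : ℤ) (hc : 0 < c) (μ ν μ' ν' : ℝ)
    (g : Matrix (Fin 2) (Fin 2) ℤ) (hg : IsUnit g.det)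
    (horb₁ : (((g 0 0 : ℝ) * μ + (g 0 1 : ℝ) * ν : ℝ) : UnitAddCircle) =
      ((μ' : ℝ) : UnitAddCircle))
    (horb₂ : (((g 1 0 : ℝ) * μ + (g 1 1 : ℝ) * ν : ℝ) : UnitAddCircle) =
      ((ν' : ℝ) : UnitAddCircle))
    (S : CstarBimodule CT2 (Xcv c ν)) (hS : IsHeisenbergBimodule c μ ν S)
    (S' : CstarBimodule CT2 (Xcv c ν')) (hS' : IsHeisenbergBimodule c μ' ν' S')
    (B : Type*) [NormedRing B] [StarRing B] [CStarRing B] [NormedAlgebra ℂ B]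
    [StarModule ℂ B] [CompleteSpace B]
    (r : CovariantRep S B) (hB : IsCrossedProduct S B r)
    (B' : Type*) [NormedRing B'] [StarRing B'] [CStarRing B'] [NormedAlgebra ℂ B']
    [StarModule ℂ B'] [CompleteSpace B']
    (r' : CovariantRep S' B') (hB' : IsCrossedProduct S' B' r') :
    Nonempty (B ≃⋆ₐ[ℂ] B') := by
  rw [Matrix.det_fin_two] at hg
  rcases Int.isUnit_iff.1 hg with hdet | hdet
  · obtain ⟨σ, Φ, h⟩ := hS.exists_isIsoOver hS' hdet horb₁ horb₂
    exact h.nonempty_starAlgEquiv hB hB'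
  · obtain ⟨σ, Φ, h⟩ := hS.exists_isAntiIsoOver hS' hdet horb₁ horb₂
    exact h.nonempty_starAlgEquiv hB hB'
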